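/- arXiv:2105.11956 — 2 statements merged into one kernel-verified Lean document; each statement's English description precedes it below -/
import Mathlib

section
/- Let A : ℝ^n → ℝ^m be a linear map with operator norm ‖A‖, let G : ℝ^k → ℝ^n be any function, let s ≤ k, and let S = {G(z) : z ∈ ℝ^k is s-sparse}. Suppose A satisfies S-REC(S, γ, δ) for some γ > 0 and δ ≥ 0. Let x ∈ ℝ^n, set y = A x, and suppose ẑ ∈ ℝ^k is s-sparse and minimizes z ↦ ‖y − A(G(z))‖₂ over s-sparse z to within additive ε ≥ 0 (i.e., ‖y − A(G(ẑ))‖₂ ≤ ‖y − A(G(z))‖₂ + ε for every s-sparse z). Then for every s-sparse z* ∈ ℝ^k, ‖G(ẑ) − x‖₂ ≤ (1 + 2‖A‖/γ)·‖G(z*) − x‖₂ + (ε + δ)/γ. -/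
/-- A vector `z ∈ ℝ^k` is `s`-sparse if at most `s` of its coordinates are nonzero. -/
def Sparse {k : ℕ} (s : ℕ) (z : EuclideanSpace ℝ (Fin k)) : Prop :=
  {i | z i ≠ 0}.ncard ≤ s

/-- The set-restricted eigenvalue condition S-REC(S, γ, δ): on differences of points of `S`, the
measurement map `A` is bounded below by `γ` up to an additive slack `δ`. It is stated for a bare
function `A`, so that it applies to every kind of bundled additive map. -/
def SatisfiesSREC {E F : Type*} [SeminormedAddCommGroup E] [SeminormedAddCommGroup F]
    (A : E → F) (S : Set E) (γ δ : ℝ) : Prop :=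
  ∀ x₁ ∈ S, ∀ x₂ ∈ S, γ * ‖x₁ - x₂‖ - δ ≤ ‖A (x₁ - x₂)‖

section Recovery

variable {E F : Type*} [SeminormedAddCommGroup E] [SeminormedAddCommGroup F]
  {S : Set E} {γ δ ε : ℝ}

theorem SatisfiesSREC.mul_norm_sub_le {Φ : Type*} [FunLike Φ E F] [AddMonoidHomClass Φ E F]
    {A : Φ} (hA : SatisfiesSREC A S γ δ) {x₁ x₂ : E} (hx₁ : x₁ ∈ S) (hx₂ : x₂ ∈ S) {y : F}
    (hle : ‖y - A x₁‖ ≤ ‖y - A x₂‖ + ε) :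
    γ * ‖x₁ - x₂‖ ≤ 2 * ‖y - A x₂‖ + (ε + δ) := by
  have lower_bound : γ * ‖x₁ - x₂‖ - δ ≤ ‖A (x₁ - x₂)‖ := hA x₁ hx₁ x₂ hx₂
  have upper_bound : ‖A (x₁ - x₂)‖ ≤ 2 * ‖y - A x₂‖ + ε :=
    calc ‖A (x₁ - x₂)‖ = ‖A x₁ - A x₂‖ := by rw [map_sub]
      _ ≤ ‖A x₁ - y‖ + ‖y - A x₂‖ := norm_sub_le_norm_sub_add_norm_sub _ _ _
      _ = ‖y - A x₁‖ + ‖y - A x₂‖ := by rw [norm_sub_rev]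
      _ ≤ 2 * ‖y - A x₂‖ + ε := by linarith
  linarith

theorem sdlss_deterministic_recovery_general {𝕜 : Type*} [NontriviallyNormedField 𝕜]
    [NormedSpace 𝕜 E] [NormedSpace 𝕜 F] {A : E →L[𝕜] F} (hγ : 0 < γ)
    (hA : SatisfiesSREC A S γ δ) {x xhat : E} (hxhat : xhat ∈ S)
    (hmin : ∀ x' ∈ S, ‖A x - A xhat‖ ≤ ‖A x - A x'‖ + ε) {xstar : E} (hxstar : xstar ∈ S) :
    ‖xhat - x‖ ≤ (1 + 2 * ‖A‖ / γ) * ‖xstar - x‖ + (ε + δ) / γ := by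
  have loss_le : ‖A x - A xstar‖ ≤ ‖A‖ * ‖xstar - x‖ := by
    simpa only [map_sub, norm_sub_rev] using A.le_opNorm (xstar - x)
  -- S-REC says nothing about `x`, which may lie outside `S`: compare `xhat` with `xstar` instead.
  have dist_le : ‖xhat - xstar‖ ≤ (2 * (‖A‖ * ‖xstar - x‖) + (ε + δ)) / γ := by
    rw [le_div_iff₀' hγ]
    linarith [hA.mul_norm_sub_le hxhat hxstar (hmin xstar hxstar)]
  calc ‖xhat - x‖ ≤ ‖xhat - xstar‖ + ‖xstar - x‖ := norm_sub_le_norm_sub_add_norm_sub _ _ _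
    _ ≤ (2 * (‖A‖ * ‖xstar - x‖) + (ε + δ)) / γ + ‖xstar - x‖ := by gcongr
    _ = (1 + 2 * ‖A‖ / γ) * ‖xstar - x‖ + (ε + δ) / γ := by ring

end Recovery

/-- Deterministic core of Theorem 1: recovery error of an approximate minimizer of the
measurement loss over `s`-sparse latent codes under S-REC. -/
theorem sdlss_deterministic_recovery
    {n m k : ℕ} (A : EuclideanSpace ℝ (Fin n) →L[ℝ] EuclideanSpace ℝ (Fin m))
    (G : EuclideanSpace ℝ (Fin k) → EuclideanSpace ℝ (Fin n))
    (s : ℕ) (hs : s ≤ k) (γ δ : ℝ) (hγ : 0 < γ) (hδ : 0 ≤ δ)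
    -- `A` satisfies S-REC(S, γ, δ) with `S = G '' {s-sparse vectors}`
    (hSREC : ∀ x₁ ∈ G '' {z | Sparse s z}, ∀ x₂ ∈ G '' {z | Sparse s z},
      γ * ‖x₁ - x₂‖ - δ ≤ ‖A (x₁ - x₂)‖)
    (x : EuclideanSpace ℝ (Fin n)) (y : EuclideanSpace ℝ (Fin m)) (hy : y = A x)
    (ε : ℝ) (hε : 0 ≤ ε)
    (zhat : EuclideanSpace ℝ (Fin k)) (hzhat : Sparse s zhat)
    (hmin : ∀ z : EuclideanSpace ℝ (Fin k), Sparse s z →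
      ‖y - A (G zhat)‖ ≤ ‖y - A (G z)‖ + ε) :
    ∀ zstar : EuclideanSpace ℝ (Fin k), Sparse s zstar →
      ‖G zhat - x‖ ≤ (1 + 2 * ‖A‖ / γ) * ‖G zstar - x‖ + (ε + δ) / γ := by
  subst hy
  exact fun zstar hzstar => sdlss_deterministic_recovery_general hγ hSREC ⟨zhat, hzhat, rfl⟩
    (Set.forall_mem_image.2 hmin) ⟨zstar, hzstar, rfl⟩
end

section
/- There exist universal constants C₀, C₁, c > 0 such that the following holds. Let G : ℝ^k → ℝ^n be any function and s ≤ k, and suppose the image {G(z) : z s-sparse} is contained in a union of N linear subspaces of ℝ^n, each of dimension at most s. Let A ∈ ℝ^{m×n} be a random matrix with i.i.d. N(0, 1/m) entries, and suppose m ≥ C₀·(log N + s). Then for any fixed x ∈ ℝ^n with y = A x, with probability at least 1 − exp(−c·m) the following holds: every s-sparse ẑ that minimizes z ↦ ‖y − A(G(z))‖₂ over s-sparse z to within additive ε ≥ 0 satisfies, for every s-sparse z*, ‖G(ẑ) − x‖₂ ≤ C₁·‖G(z*) − x‖₂ + C₁·ε. -/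
open MeasureTheory ProbabilityTheory

/-- The law of an `m × n` random matrix with i.i.d. `N(0, 1/m)` entries. -/
noncomputable def gaussMatrix (m n : ℕ) : Measure (Fin m → Fin n → ℝ) :=
  Measure.pi fun _ => Measure.pi fun _ => gaussianReal 0 ((m : NNReal))⁻¹

/-!
If `A` distorts the norms of all the vectors `G z - x` by factors between `1 / 8` and `17 / 8`, then
a small residual `‖A x - A (G z)‖` forces `G z` to be close to `x`, and the recovery bound is a
comparison of residuals. Each `G z - x` lies in one of the `N` subspaces `V i ⊔ span {x}`, of
dimension at most `s + 1`. For a single vector `u`, the entries of `A u` are i.i.d. Gaussian, so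
`‖A u‖ ^ 2` is a scaled chi-squared variable and the Chernoff method bounds its deviations by
`exp (-m / 2)`. A union bound over a `1 / 17`-net of the unit sphere of each subspace, of at most
`35 ^ (s + 1)` points, and over the `N` subspaces costs a factor that `m ≥ 32 * (log N + s)` absorbs
when `s ≥ 1`; when `s = 0`, the image of `G` is `{0}` and there is nothing to prove.
-/

open Metric Module
open scoped NNReal

section Covering

variable {E : Type*} [NormedAddCommGroup E] [NormedSpace ℝ E] [FiniteDimensional ℝ E]

/- The balls of radius `δ / 2` about the points are disjoint and lie in the ball of radius
`1 + δ / 2`; compare volumes. -/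
lemma card_le_of_isSeparated_of_subset_closedBall {δ : ℝ≥0} (hδ : 0 < δ) {T : Finset E}
    (hsep : IsSeparated δ (T : Set E)) (hball : (T : Set E) ⊆ closedBall 0 1) :
    (T.card : ℝ) ≤ (1 + 2 / δ) ^ finrank ℝ E := by
  borelize E
  let μ : Measure E := Measure.addHaar
  have hδ' : (0 : ℝ) < δ := hδ
  have hdisj : (T : Set E).PairwiseDisjoint fun t ↦ ball t (δ / 2 : ℝ) := fun t ht u hu htu ↦ by
    have hlt : (δ : ℝ) < dist t u := by
      have h : (δ : ENNReal) < edist t u := hsep ht hu htu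
      rwa [edist_nndist, ENNReal.coe_lt_coe, ← NNReal.coe_lt_coe, coe_nndist] at h
    exact ball_disjoint_ball (by linarith)
  have hsub : ⋃ t ∈ T, ball t (δ / 2 : ℝ) ⊆ ball 0 (1 + δ / 2) :=
    Set.iUnion₂_subset fun t ht ↦ ball_subset_ball' (by linarith [mem_closedBall.1 (hball ht)])
  have hvol_ball (t : E) {r : ℝ} (hr : 0 < r) :
      μ.real (ball t r) = r ^ finrank ℝ E * μ.real (ball 0 1) := by
    rw [measureReal_def, μ.addHaar_ball_of_pos t hr, ENNReal.toReal_mul,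
      ENNReal.toReal_ofReal (by positivity), measureReal_def]
  have hball_pos : 0 < μ.real (ball 0 1) :=
    ENNReal.toReal_pos (measure_ball_pos μ 0 one_pos).ne' measure_ball_lt_top.ne
  have hvol : T.card * (δ / 2 : ℝ) ^ finrank ℝ E * μ.real (ball 0 1)
      ≤ (1 + δ / 2 : ℝ) ^ finrank ℝ E * μ.real (ball 0 1) :=
    calc T.card * (δ / 2 : ℝ) ^ finrank ℝ E * μ.real (ball 0 1)
        = ∑ t ∈ T, μ.real (ball t (δ / 2)) := by
          simp [hvol_ball _ (half_pos hδ'), mul_assoc]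
      _ = μ.real (⋃ t ∈ T, ball t (δ / 2)) :=
          (measureReal_biUnion_finset hdisj (fun _ _ ↦ measurableSet_ball)
            fun _ _ ↦ measure_ball_lt_top.ne).symm
      _ ≤ μ.real (ball 0 (1 + δ / 2)) := measureReal_mono hsub measure_ball_lt_top.ne
      _ = (1 + δ / 2 : ℝ) ^ finrank ℝ E * μ.real (ball 0 1) :=
          hvol_ball _ (by positivity)
  calc (T.card : ℝ) ≤ (1 + δ / 2 : ℝ) ^ finrank ℝ E / (δ / 2 : ℝ) ^ finrank ℝ E :=
        (le_div_iff₀ (by positivity)).2 (le_of_mul_le_mul_right hvol hball_pos)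
    _ = (1 + 2 / δ) ^ finrank ℝ E := by rw [← div_pow]; congr 1; field_simp; ring

lemma packingNumber_le_of_subset_closedBall {δ : ℝ≥0} (hδ : 0 < δ) {A : Set E}
    (hA : A ⊆ closedBall 0 1) :
    packingNumber δ A ≤ ⌊(1 + 2 / δ : ℝ) ^ finrank ℝ E⌋₊ := by
  refine iSup_le fun C ↦ iSup₂_le fun hCA hsep ↦ ?_
  by_contra! hlt
  obtain ⟨T, hTC, hT⟩ := Set.exists_subset_encard_eq (Order.add_one_le_of_lt hlt)
  lift T to Finset E using Set.finite_of_encard_eq_coe hT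
  have hcard := card_le_of_isSeparated_of_subset_closedBall hδ (hsep.mono hTC)
    (hTC.trans (hCA.trans hA))
  rw [Set.encard_coe_eq_coe_finsetCard] at hT
  have hT' : T.card = ⌊(1 + 2 / δ : ℝ) ^ finrank ℝ E⌋₊ + 1 := mod_cast hT
  have := Nat.le_floor hcard
  omega

lemma exists_finset_isCover_of_subset_closedBall {δ : ℝ≥0} (hδ : 0 < δ) {A : Set E}
    (hA : A ⊆ closedBall 0 1) :
    ∃ T : Finset E, (T : Set E) ⊆ A ∧ IsCover δ A (T : Set E) ∧
      (T.card : ℝ) ≤ (1 + 2 / δ) ^ finrank ℝ E := by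
  have hle := (coveringNumber_le_packingNumber δ A).trans
    (packingNumber_le_of_subset_closedBall hδ hA)
  obtain ⟨T, hTA, hfin, hcover, hcard⟩ :=
    exists_set_encard_eq_coveringNumber (hle.trans_lt (ENat.natCast_lt_top _)).ne
  lift T to Finset E using hfin
  rw [← hcard, Set.encard_coe_eq_coe_finsetCard, Nat.cast_le] at hle
  exact ⟨T, hTA, hcover, (Nat.le_floor_iff (by positivity)).1 hle⟩

end Covering

lemma exists_mem_norm_sub_le_of_isCover {E : Type*} [SeminormedAddCommGroup E] {δ : ℝ≥0} {T : Set E}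
    (hcover : IsCover δ (sphere 0 1) T) {u : E} (hu : ‖u‖ = 1) : ∃ t ∈ T, ‖u - t‖ ≤ δ := by
  obtain ⟨t, ht, hut⟩ := hcover (mem_sphere_zero_iff_norm.2 hu)
  refine ⟨t, ht, ?_⟩
  rw [← dist_eq_norm]
  exact_mod_cast (edist_le_coe.1 hut : nndist u t ≤ δ)

/-- `L` distorts the norm of every vector of `S` by a factor between `a` and `b`. For `S` the
differences of two signals this is the restricted isometry property of compressed sensing, written
for norms rather than for squared norms. -/
def NormEquivOn {E F : Type*} [NormedAddCommGroup E] [NormedSpace ℝ E]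
    [NormedAddCommGroup F] [NormedSpace ℝ F] (L : E →ₗ[ℝ] F) (S : Set E) (a b : ℝ) : Prop :=
  ∀ u ∈ S, a * ‖u‖ ≤ ‖L u‖ ∧ ‖L u‖ ≤ b * ‖u‖

namespace NormEquivOn

variable {E F : Type*} [NormedAddCommGroup E] [NormedSpace ℝ E]
  [NormedAddCommGroup F] [NormedSpace ℝ F] {L : E →ₗ[ℝ] F} {S T : Set E} {a b : ℝ}

lemma mul_norm_sub_le {x y z : E} {ε : ℝ} (hL : NormEquivOn L S a b)
    (hy : y - x ∈ S) (hz : z - x ∈ S) (hmin : ‖L x - L y‖ ≤ ‖L x - L z‖ + ε) :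
    a * ‖y - x‖ ≤ b * ‖z - x‖ + ε :=
  calc a * ‖y - x‖ ≤ ‖L (y - x)‖ := (hL _ hy).1
    _ = ‖L x - L y‖ := by rw [map_sub, norm_sub_rev]
    _ ≤ ‖L x - L z‖ + ε := hmin
    _ = ‖L (z - x)‖ + ε := by rw [map_sub, norm_sub_rev]
    _ ≤ b * ‖z - x‖ + ε := by gcongr; exact (hL _ hz).2

lemma iUnion_iff {ι : Sort*} {S : ι → Set E} :
    NormEquivOn L (⋃ i, S i) a b ↔ ∀ i, NormEquivOn L (S i) a b := by
  simp only [NormEquivOn, Set.mem_iUnion, forall_exists_index]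
  exact forall_comm

variable {δ : ℝ≥0}

/- The operator norm `M` of `L` satisfies `M ≤ b + M * δ`. -/
lemma opNorm_le_of_isCover [FiniteDimensional ℝ E] (hL : NormEquivOn L T a b)
    (hT : T ⊆ sphere 0 1) (hcover : IsCover δ (sphere 0 1) T) (hδ : δ < 1) (hb : 0 ≤ b) :
    ‖L.toContinuousLinearMap‖ ≤ b / (1 - δ) := by
  set M := L.toContinuousLinearMap with hM
  have hsphere : ∀ u : E, ‖u‖ = 1 → ‖M u‖ ≤ b + ‖M‖ * δ := fun u hu ↦ by
    obtain ⟨t, ht, hut⟩ := exists_mem_norm_sub_le_of_isCover hcover hu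
    have ht_norm : ‖t‖ = 1 := mem_sphere_zero_iff_norm.1 (hT ht)
    calc ‖M u‖ = ‖L t + M (u - t)‖ := by simp [hM]
      _ ≤ ‖L t‖ + ‖M (u - t)‖ := norm_add_le _ _
      _ ≤ b + ‖M‖ * δ := by
        gcongr
        · simpa [ht_norm] using (hL t ht).2
        · exact M.le_opNorm_of_le hut
  have hself := M.opNorm_le_of_unit_norm (by positivity) hsphere
  rw [le_div_iff₀ (sub_pos.2 (by exact_mod_cast hδ))]
  linarith

lemma univ_of_isCover [FiniteDimensional ℝ E] (hL : NormEquivOn L T a b)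
    (hT : T ⊆ sphere 0 1) (hcover : IsCover δ (sphere 0 1) T) (hδ : δ < 1) (hb : 0 ≤ b) :
    NormEquivOn L Set.univ (a - b / (1 - δ) * δ) (b / (1 - δ)) := by
  set M := L.toContinuousLinearMap
  have hM_le : ‖M‖ ≤ b / (1 - δ) := hL.opNorm_le_of_isCover hT hcover hδ hb
  have hsphere : ∀ u : E, ‖u‖ = 1 → a - b / (1 - δ) * δ ≤ ‖L u‖ := fun u hu ↦ by
    obtain ⟨t, ht, hut⟩ := exists_mem_norm_sub_le_of_isCover hcover hu
    have ht_norm : ‖t‖ = 1 := mem_sphere_zero_iff_norm.1 (hT ht)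
    have hLt : a ≤ ‖L t‖ := by simpa [ht_norm] using (hL t ht).1
    have hdiff : ‖L u - L t‖ ≤ b / (1 - δ) * δ := by
      rw [← map_sub]
      exact (M.le_of_opNorm_le hM_le (u - t)).trans
        (mul_le_mul_of_nonneg_left hut ((norm_nonneg M).trans hM_le))
    have htri := norm_sub_norm_le (L t) (L u)
    rw [norm_sub_rev] at htri
    linarith
  refine fun u _ ↦ ⟨?_, M.le_of_opNorm_le hM_le u⟩
  rcases eq_or_ne u 0 with rfl | hu
  · simp
  · have hscaled := hsphere (‖u‖⁻¹ • u) (norm_smul_inv_norm (𝕜 := ℝ) hu)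
    rwa [map_smul, norm_smul, norm_inv, norm_norm, inv_mul_eq_div,
      le_div_iff₀ (norm_pos_iff.2 hu)] at hscaled

end NormEquivOn

section Gaussian

variable {ι κ : Type*} [Fintype ι] [Fintype κ]

lemma map_sum_mul_pi_gaussianReal (μ : ι → ℝ) (v : ι → ℝ≥0) (c : ι → ℝ) :
    (Measure.pi fun i ↦ gaussianReal (μ i) (v i)).map (fun x ↦ ∑ i, c i * x i) =
      gaussianReal (∑ i, c i * μ i) (∑ i, ‖c i‖₊ ^ 2 * v i) := by
  have hindep : iIndepFun (fun i (x : ι → ℝ) ↦ c i * x i)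
      (Measure.pi fun i ↦ gaussianReal (μ i) (v i)) :=
    iIndepFun_pi (X := fun i t ↦ c i * t) fun i ↦ by fun_prop
  have hlaw (i : ι) : (Measure.pi fun i ↦ gaussianReal (μ i) (v i)).map (fun x ↦ c i * x i) =
      gaussianReal (c i * μ i) (‖c i‖₊ ^ 2 * v i) := by
    have hcoord : HasLaw (fun x : ι → ℝ ↦ x i) (gaussianReal (μ i) (v i))
        (Measure.pi fun i ↦ gaussianReal (μ i) (v i)) :=
      (measurePreserving_eval (fun i ↦ gaussianReal (μ i) (v i)) i).hasLaw
    rw [(gaussianReal_const_mul hcoord (c i)).map_eq]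
    congr 2
    ext
    simp
  have : IsProbabilityMeasure
      ((Measure.pi fun i ↦ gaussianReal (μ i) (v i)).map fun x ↦ ∑ i, c i * x i) :=
    Measure.isProbabilityMeasure_map (Measurable.aemeasurable (by fun_prop))
  refine Measure.ext_of_charFun (funext fun t ↦ ?_)
  rw [hindep.charFun_map_fun_sum_eq_prod (fun i ↦ Measurable.aemeasurable (by fun_prop)),
    Finset.prod_apply]
  simp_rw [hlaw, charFun_gaussianReal, ← Complex.exp_sum]
  push_cast
  simp only [Finset.sum_sub_distrib, Finset.mul_sum, Finset.sum_mul, Finset.sum_div]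

lemma map_mulVec_pi_gaussianReal (v : ℝ≥0) (u : EuclideanSpace ℝ κ) :
    (Measure.pi fun _ : ι ↦ Measure.pi fun _ : κ ↦ gaussianReal 0 v).map
        (fun A i ↦ ∑ j, A i j * u j) =
      Measure.pi fun _ : ι ↦ gaussianReal 0 (‖u‖₊ ^ 2 * v) := by
  have hrow : (Measure.pi fun _ : κ ↦ gaussianReal 0 v).map (fun a ↦ ∑ j, a j * u j) =
      gaussianReal 0 (‖u‖₊ ^ 2 * v) := by
    simp_rw [mul_comm _ (u _)]
    rw [map_sum_mul_pi_gaussianReal]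
    congr 2
    · simp
    · ext
      simp [EuclideanSpace.norm_sq_eq, Finset.sum_mul]
  rw [Measure.pi_map_pi (f := fun _ (a : κ → ℝ) ↦ ∑ j, a j * u j)
    fun i ↦ Measurable.aemeasurable (by fun_prop)]
  simp_rw [hrow]

lemma mgf_sq_gaussianReal {v : ℝ≥0} (hv : v ≠ 0) {t : ℝ} (ht : 2 * t * v < 1) :
    mgf (fun x ↦ x ^ 2) (gaussianReal 0 v) t = (√(1 - 2 * t * v))⁻¹ := by
  have hv_pos : (0 : ℝ) < v := NNReal.coe_pos.2 (pos_iff_ne_zero.2 hv)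
  have hsub_pos : 0 < 1 - 2 * t * v := sub_pos.2 ht
  have hdensity (x : ℝ) : gaussianPDFReal 0 v x • Real.exp (t * x ^ 2) =
      (√(2 * Real.pi * v))⁻¹ * Real.exp (-((1 - 2 * t * v) / (2 * v)) * x ^ 2) := by
    rw [gaussianPDFReal, smul_eq_mul, mul_assoc, ← Real.exp_add]
    congr 2
    field_simp
    ring
  simp_rw [mgf, integral_gaussianReal_eq_integral_smul hv, hdensity]
  rw [integral_const_mul, integral_gaussian, ← Real.sqrt_inv, ← Real.sqrt_inv,
    ← Real.sqrt_mul (by positivity)]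
  congr 1
  field_simp

lemma mgf_sum_sq_pi_gaussianReal {v : ℝ≥0} (hv : v ≠ 0) {t : ℝ} (ht : 2 * t * v < 1) :
    mgf (fun x : ι → ℝ ↦ ∑ i, x i ^ 2) (Measure.pi fun _ ↦ gaussianReal 0 v) t =
      (√(1 - 2 * t * v))⁻¹ ^ Fintype.card ι := by
  simp_rw [mgf, Finset.mul_sum, Real.exp_sum]
  rw [integral_fintype_prod_eq_pow (fun x : ℝ ↦ Real.exp (t * x ^ 2))]
  exact congrArg (· ^ _) (mgf_sq_gaussianReal hv ht)

lemma integrable_exp_mul_sum_sq {v : ℝ≥0} (hv : v ≠ 0) {t : ℝ} (ht : 2 * t * v < 1) :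
    Integrable (fun x : ι → ℝ ↦ Real.exp (t * ∑ i, x i ^ 2))
      (Measure.pi fun _ ↦ gaussianReal 0 v) := by
  refine .of_integral_ne_zero ((mgf_sum_sq_pi_gaussianReal hv ht).trans_ne ?_)
  have := sub_pos.2 ht
  positivity

/-- The large deviation rate of the chi-squared law with one degree of freedom: the mean of
`d` squared standard Gaussians is beyond `t` with probability at most
`exp (-d * chiSquareRate t)`. -/
noncomputable def chiSquareRate (t : ℝ) : ℝ := (t - 1 - Real.log t) / 2

/-- The exponential tilt that optimizes the Chernoff bound on the deviation of a sum of squared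
`N(0, v)` variables to `t` times its mean. -/
noncomputable def chiSquareTilt (v : ℝ≥0) (t : ℝ) : ℝ := (1 - t⁻¹) / (2 * v)

lemma two_mul_chiSquareTilt_mul {v : ℝ≥0} (hv : v ≠ 0) (t : ℝ) :
    2 * chiSquareTilt v t * v = 1 - t⁻¹ := by
  have hv' : (v : ℝ) ≠ 0 := NNReal.coe_ne_zero.2 hv
  rw [chiSquareTilt]
  field_simp

lemma two_mul_chiSquareTilt_mul_lt_one {v : ℝ≥0} (hv : v ≠ 0) {t : ℝ} (ht : 0 < t) :
    2 * chiSquareTilt v t * v < 1 := by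
  rw [two_mul_chiSquareTilt_mul hv]
  exact sub_lt_self _ (inv_pos.2 ht)

lemma exp_chiSquareTilt_mul_mgf {v : ℝ≥0} (hv : v ≠ 0) {t : ℝ} (ht : 0 < t) :
    Real.exp (-chiSquareTilt v t * (t * (Fintype.card ι * v))) *
        mgf (fun x : ι → ℝ ↦ ∑ i, x i ^ 2) (Measure.pi fun _ ↦ gaussianReal 0 v)
          (chiSquareTilt v t) =
      Real.exp (-(Fintype.card ι * chiSquareRate t)) := by
  have hsqrt : √t = Real.exp (Real.log t / 2) := by
    rw [← Real.log_sqrt ht.le, Real.exp_log (Real.sqrt_pos.2 ht)]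
  have hexponent : -chiSquareTilt v t * (t * (Fintype.card ι * v)) =
      -(Fintype.card ι * ((t - 1) / 2)) := by
    calc -chiSquareTilt v t * (t * (Fintype.card ι * v))
        = -(2 * chiSquareTilt v t * v) * (t * Fintype.card ι / 2) := by ring
      _ = -(Fintype.card ι * ((t - 1) / 2)) := by
        rw [two_mul_chiSquareTilt_mul hv]
        field_simp
  rw [mgf_sum_sq_pi_gaussianReal hv (two_mul_chiSquareTilt_mul_lt_one hv ht),
    two_mul_chiSquareTilt_mul hv, sub_sub_cancel, Real.sqrt_inv, inv_inv, hsqrt,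
    ← Real.exp_nat_mul, ← Real.exp_add, hexponent, chiSquareRate]
  congr 1
  ring

lemma measureReal_sum_sq_ge_le {v : ℝ≥0} (hv : v ≠ 0) {t : ℝ} (ht : 1 ≤ t) :
    (Measure.pi fun _ : ι ↦ gaussianReal 0 v).real
        {x | t * (Fintype.card ι * v) ≤ ∑ i, x i ^ 2} ≤
      Real.exp (-(Fintype.card ι * chiSquareRate t)) := by
  have ht_pos : 0 < t := zero_lt_one.trans_le ht
  rw [← exp_chiSquareTilt_mul_mgf hv ht_pos]
  refine measure_ge_le_exp_mul_mgf _ ?_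
    (integrable_exp_mul_sum_sq hv (two_mul_chiSquareTilt_mul_lt_one hv ht_pos))
  exact div_nonneg (sub_nonneg.2 (inv_le_one_of_one_le₀ ht)) (by positivity)

lemma measureReal_sum_sq_le_le {v : ℝ≥0} (hv : v ≠ 0) {t : ℝ} (ht_pos : 0 < t) (ht : t ≤ 1) :
    (Measure.pi fun _ : ι ↦ gaussianReal 0 v).real
        {x | ∑ i, x i ^ 2 ≤ t * (Fintype.card ι * v)} ≤
      Real.exp (-(Fintype.card ι * chiSquareRate t)) := by
  rw [← exp_chiSquareTilt_mul_mgf hv ht_pos]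
  refine measure_le_le_exp_mul_mgf _ ?_
    (integrable_exp_mul_sum_sq hv (two_mul_chiSquareTilt_mul_lt_one hv ht_pos))
  exact div_nonpos_of_nonpos_of_nonneg (sub_nonpos.2 ((one_le_inv₀ ht_pos).2 ht)) (by positivity)

end Gaussian

section GaussMatrix

variable {m n : ℕ} {a b : ℝ}

instance isProbabilityMeasure_gaussMatrix : IsProbabilityMeasure (gaussMatrix m n) := by
  unfold gaussMatrix
  infer_instance

lemma norm_sq_toEuclideanLin_of (A : Fin m → Fin n → ℝ) (u : EuclideanSpace ℝ (Fin n)) :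
    ‖Matrix.toEuclideanLin (Matrix.of A) u‖ ^ 2 = ∑ i, (∑ j, A i j * u j) ^ 2 := by
  simp [EuclideanSpace.norm_sq_eq, Matrix.toLpLin_apply, Matrix.mulVec, dotProduct]

lemma measureReal_gaussMatrix_not_normEquivOn_singleton_le (ha : 0 < a) (ha_one : a ≤ 1)
    (hb : 1 ≤ b) (u : EuclideanSpace ℝ (Fin n)) :
    (gaussMatrix m n).real {A | ¬ NormEquivOn (Matrix.toEuclideanLin (Matrix.of A)) {u} a b} ≤
      Real.exp (-(m * chiSquareRate (a ^ 2))) + Real.exp (-(m * chiSquareRate (b ^ 2))) := by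
  rcases eq_or_ne m 0 with rfl | hm
  · exact measureReal_le_one.trans (by norm_num)
  rcases eq_or_ne u 0 with rfl | hu
  · simp [NormEquivOn, add_nonneg, Real.exp_nonneg]
  let v : ℝ≥0 := ‖u‖₊ ^ 2 * (m : ℝ≥0)⁻¹
  have hv : v ≠ 0 := by simp [v, hm, hu]
  have hmean : Fintype.card (Fin m) * (v : ℝ) = ‖u‖ ^ 2 := by
    simp only [Fintype.card_fin, v, NNReal.coe_mul, NNReal.coe_pow, coe_nnnorm, NNReal.coe_inv,
      NNReal.coe_natCast]
    field_simp
  let lower : Set (Fin m → ℝ) := {y | ∑ i, y i ^ 2 ≤ a ^ 2 * (Fintype.card (Fin m) * v)}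
  let upper : Set (Fin m → ℝ) := {y | b ^ 2 * (Fintype.card (Fin m) * v) ≤ ∑ i, y i ^ 2}
  have hsub : {A | ¬ NormEquivOn (Matrix.toEuclideanLin (Matrix.of A)) {u} a b} ⊆
      (fun A i ↦ ∑ j, A i j * u j) ⁻¹' (lower ∪ upper) := fun A hA ↦ by
    simp only [NormEquivOn, Set.mem_singleton_iff, forall_eq, Set.mem_ofPred_eq, not_and_or,
      not_le] at hA
    simp only [Set.mem_preimage, Set.mem_union, lower, upper, Set.mem_ofPred_eq, hmean, ← mul_pow,
      ← norm_sq_toEuclideanLin_of]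
    exact hA.imp (fun h ↦ by gcongr) (fun h ↦ by gcongr)
  have hmeas : MeasurableSet (lower ∪ upper) :=
    (measurableSet_le (by fun_prop) (by fun_prop)).union
      (measurableSet_le (by fun_prop) (by fun_prop))
  calc (gaussMatrix m n).real {A | ¬ NormEquivOn (Matrix.toEuclideanLin (Matrix.of A)) {u} a b}
      ≤ (gaussMatrix m n).real ((fun A i ↦ ∑ j, A i j * u j) ⁻¹' (lower ∪ upper)) :=
        measureReal_mono hsub
    _ = (Measure.pi fun _ ↦ gaussianReal 0 v).real (lower ∪ upper) := by
        rw [← map_measureReal_apply (by fun_prop) hmeas, gaussMatrix, map_mulVec_pi_gaussianReal]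
    _ ≤ (Measure.pi fun _ ↦ gaussianReal 0 v).real lower +
          (Measure.pi fun _ ↦ gaussianReal 0 v).real upper := measureReal_union_le _ _
    _ ≤ Real.exp (-(m * chiSquareRate (a ^ 2))) + Real.exp (-(m * chiSquareRate (b ^ 2))) := by
        gcongr
        · exact (measureReal_sum_sq_le_le hv (pow_pos ha 2) (pow_le_one₀ ha.le ha_one)).trans_eq
            (by rw [Fintype.card_fin])
        · exact (measureReal_sum_sq_ge_le hv (one_le_pow₀ hb)).trans_eq (by rw [Fintype.card_fin])

lemma measureReal_gaussMatrix_not_normEquivOn_submodule_le (ha : 0 < a) (ha_one : a ≤ 1)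
    (hb : 1 ≤ b) {δ : ℝ≥0} (hδ : 0 < δ) (hδ_one : δ < 1)
    (W : Submodule ℝ (EuclideanSpace ℝ (Fin n))) :
    (gaussMatrix m n).real {A | ¬ NormEquivOn (Matrix.toEuclideanLin (Matrix.of A)) W
        (a - b / (1 - δ) * δ) (b / (1 - δ))} ≤
      (1 + 2 / δ) ^ finrank ℝ W *
        (Real.exp (-(m * chiSquareRate (a ^ 2))) + Real.exp (-(m * chiSquareRate (b ^ 2)))) := by
  obtain ⟨T, hT, hcover, hcard⟩ := exists_finset_isCover_of_subset_closedBall hδ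
    (sphere_subset_closedBall (x := (0 : W)) (ε := 1))
  let bad (t : W) : Set (Fin m → Fin n → ℝ) :=
    {A | ¬ NormEquivOn (Matrix.toEuclideanLin (Matrix.of A)) {(t : EuclideanSpace ℝ (Fin n))} a b}
  have hsub : {A : Fin m → Fin n → ℝ | ¬ NormEquivOn (Matrix.toEuclideanLin (Matrix.of A)) W
      (a - b / (1 - δ) * δ) (b / (1 - δ))} ⊆ ⋃ t ∈ T, bad t := by
    intro A hA
    by_contra hgood
    simp only [bad, Set.mem_iUnion, Set.mem_ofPred_eq, not_exists, not_not] at hgood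
    have hnet : NormEquivOn ((Matrix.toEuclideanLin (Matrix.of A)).comp W.subtype) T a b :=
      fun t ht ↦ hgood t ht t rfl
    exact hA fun u hu ↦
      hnet.univ_of_isCover hT hcover hδ_one (zero_le_one.trans hb) ⟨u, hu⟩ trivial
  calc _ ≤ (gaussMatrix m n).real (⋃ t ∈ T, bad t) := measureReal_mono hsub (measure_ne_top _ _)
    _ ≤ ∑ t ∈ T, (gaussMatrix m n).real (bad t) := measureReal_biUnion_finset_le _ _
    _ ≤ T.card • (Real.exp (-(m * chiSquareRate (a ^ 2))) +
          Real.exp (-(m * chiSquareRate (b ^ 2)))) :=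
        Finset.sum_le_card_nsmul _ _ _ fun t _ ↦
          measureReal_gaussMatrix_not_normEquivOn_singleton_le ha ha_one hb _
    _ ≤ _ := by
        rw [nsmul_eq_mul]
        gcongr

lemma half_le_chiSquareRate_quarter_sq : 1 / 2 ≤ chiSquareRate ((1 / 4) ^ 2) := by
  have hlog : Real.log ((1 / 4) ^ 2) = -4 * Real.log 2 := by
    rw [show ((1 / 4 : ℝ) ^ 2) = (2 ^ 4)⁻¹ by norm_num, Real.log_inv, Real.log_pow,
      Nat.cast_ofNat, neg_mul]
  rw [chiSquareRate, hlog]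
  linarith [Real.log_two_gt_d9]

lemma half_le_chiSquareRate_two_sq : 1 / 2 ≤ chiSquareRate (2 ^ 2) := by
  rw [chiSquareRate, Real.log_pow, Nat.cast_ofNat]
  linarith [Real.log_two_lt_d9]

/- With a net of radius `1 / 17`, the bounds `1 / 4` and `2` at its points become
`1 / 8 = 1 / 4 - 17 / 8 / 17` and `17 / 8 = 2 / (1 - 1 / 17)`, and `35 = 1 + 2 * 17`. -/
lemma measureReal_gaussMatrix_not_normEquivOn_submodule_le_exp
    (W : Submodule ℝ (EuclideanSpace ℝ (Fin n))) :
    (gaussMatrix m n).real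
        {A | ¬ NormEquivOn (Matrix.toEuclideanLin (Matrix.of A)) W (1 / 8) (17 / 8)} ≤
      35 ^ finrank ℝ W * (2 * Real.exp (-(m / 2))) := by
  have hbound := measureReal_gaussMatrix_not_normEquivOn_submodule_le (m := m) (a := 1 / 4) (b := 2)
    (by norm_num) (by norm_num) (by norm_num) (δ := 1 / 17) (by norm_num)
    (NNReal.coe_lt_coe.1 (by norm_num)) W
  have hδ : ((1 / 17 : ℝ≥0) : ℝ) = 1 / 17 := by norm_num
  have hlower : (1 / 4 : ℝ) - 2 / (1 - 1 / 17) * (1 / 17) = 1 / 8 := by norm_num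
  have hupper : (2 : ℝ) / (1 - 1 / 17) = 17 / 8 := by norm_num
  have hnet : 1 + 2 / (1 / 17 : ℝ) = 35 := by norm_num
  have htail {r : ℝ} (hr : 1 / 2 ≤ r) : (m / 2 : ℝ) ≤ m * r := by
    rw [div_eq_mul_one_div]
    gcongr
  rw [hδ, hlower, hupper, hnet] at hbound
  refine hbound.trans ?_
  rw [two_mul]
  gcongr
  · exact htail half_le_chiSquareRate_quarter_sq
  · exact htail half_le_chiSquareRate_two_sq

lemma measureReal_gaussMatrix_not_normEquivOn_iUnion_le_exp {ι : Type*} [Fintype ι] {d : ℕ}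
    {W : ι → Submodule ℝ (EuclideanSpace ℝ (Fin n))} (hW : ∀ i, finrank ℝ (W i) ≤ d) :
    (gaussMatrix m n).real {A | ¬ NormEquivOn (Matrix.toEuclideanLin (Matrix.of A))
        (⋃ i, (W i : Set (EuclideanSpace ℝ (Fin n)))) (1 / 8) (17 / 8)} ≤
      Fintype.card ι * (35 ^ d * (2 * Real.exp (-(m / 2)))) := by
  simp_rw [NormEquivOn.iUnion_iff, not_forall, Set.ofPred_exists]
  calc _ ≤ _ := measureReal_iUnion_fintype_le _
    _ ≤ ∑ i, 35 ^ finrank ℝ (W i) * (2 * Real.exp (-(m / 2))) :=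
        Finset.sum_le_sum fun i _ ↦ measureReal_gaussMatrix_not_normEquivOn_submodule_le_exp (W i)
    _ ≤ ∑ _ : ι, 35 ^ d * (2 * Real.exp (-(m / 2))) := by
        gcongr with i
        · norm_num
        · exact hW i
    _ = Fintype.card ι * (35 ^ d * (2 * Real.exp (-(m / 2)))) := by
        rw [Finset.sum_const, Finset.card_univ, nsmul_eq_mul]

end GaussMatrix

lemma mul_pow_mul_exp_neg_le {N s m : ℕ} (hs : 1 ≤ s) (hm : 32 * (Real.log N + s) ≤ m) :
    (N : ℝ) * (35 ^ (s + 1) * (2 * Real.exp (-(m / 2)))) ≤ Real.exp (-(1 / 4) * m) := by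
  have hexp : (2450 : ℝ) ≤ Real.exp 8 := by
    calc (2450 : ℝ) ≤ 2.7 ^ 8 := by norm_num
      _ ≤ Real.exp 1 ^ 8 := by gcongr; linarith [Real.exp_one_gt_d9]
      _ = Real.exp 8 := by rw [← Real.exp_nat_mul]; norm_num
  have hnet : (35 : ℝ) ^ (s + 1) * 2 ≤ Real.exp (8 * s) := by
    calc (35 : ℝ) ^ (s + 1) * 2 = 35 ^ s * 70 ^ 1 := by ring
      _ ≤ 35 ^ s * 70 ^ s := by gcongr; norm_num
      _ = 2450 ^ s := by rw [← mul_pow]; norm_num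
      _ ≤ Real.exp 8 ^ s := by gcongr
      _ = Real.exp (8 * s) := by rw [← Real.exp_nat_mul, mul_comm]
  calc (N : ℝ) * (35 ^ (s + 1) * (2 * Real.exp (-(m / 2))))
      = N * (35 ^ (s + 1) * 2) * Real.exp (-(m / 2)) := by ring
    _ ≤ Real.exp (Real.log N) * Real.exp (8 * s) * Real.exp (-(m / 2)) := by
        gcongr
        exact Real.le_exp_log _
    _ = Real.exp (Real.log N + 8 * s - m / 2) := by
        rw [← Real.exp_add, ← Real.exp_add, sub_eq_add_neg]
    _ ≤ Real.exp (-(1 / 4) * m) := by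
        gcongr
        linarith [Real.log_natCast_nonneg N]

lemma ofReal_one_sub_le_measure_of_measureReal_compl_le {Ω : Type*} [MeasurableSpace Ω]
    {μ : Measure Ω} [IsProbabilityMeasure μ] {s : Set Ω} {p : ℝ} (h : μ.real sᶜ ≤ p) :
    ENNReal.ofReal (1 - p) ≤ μ s := by
  have hcover : 1 ≤ μ.real s + μ.real sᶜ := by
    calc (1 : ℝ) = μ.real (s ∪ sᶜ) := by simp
      _ ≤ μ.real s + μ.real sᶜ := measureReal_union_le _ _
  rw [← ofReal_measureReal (μ := μ) (s := s)]
  exact ENNReal.ofReal_le_ofReal (by linarith)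

lemma finrank_sup_span_singleton_le {K V : Type*} [DivisionRing K] [AddCommGroup V] [Module K V]
    [FiniteDimensional K V] (W : Submodule K V) (x : V) :
    finrank K ↥(W ⊔ Submodule.span K {x}) ≤ finrank K W + 1 :=
  (Submodule.finrank_add_le_finrank_add_finrank _ _).trans
    (Nat.add_le_add_left ((finrank_span_le_card _).trans (by simp)) _)

theorem sdlss_sample_complexity_recovery_general {Z ι : Type*} [Fintype ι] {n s m : ℕ}
    {S : Set Z} {G : Z → EuclideanSpace ℝ (Fin n)}
    {V : ι → Submodule ℝ (EuclideanSpace ℝ (Fin n))} (hV : ∀ i, finrank ℝ (V i) ≤ s)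
    (hG : G '' S ⊆ ⋃ i, (V i : Set (EuclideanSpace ℝ (Fin n))))
    (hm : 32 * (Real.log (Fintype.card ι) + s) ≤ m) (x : EuclideanSpace ℝ (Fin n)) :
    ENNReal.ofReal (1 - Real.exp (-(1 / 4) * m)) ≤
      gaussMatrix m n {A | ∀ ε : ℝ, 0 ≤ ε → ∀ zhat ∈ S,
        (∀ z ∈ S, ‖Matrix.toEuclideanLin (Matrix.of A) x
              - Matrix.toEuclideanLin (Matrix.of A) (G zhat)‖ ≤
            ‖Matrix.toEuclideanLin (Matrix.of A) x
              - Matrix.toEuclideanLin (Matrix.of A) (G z)‖ + ε) →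
        ∀ zstar ∈ S, ‖G zhat - x‖ ≤ 17 * ‖G zstar - x‖ + 17 * ε} := by
  refine ofReal_one_sub_le_measure_of_measureReal_compl_le ?_
  have hGV : ∀ z ∈ S, ∃ i, G z ∈ V i := fun z hz ↦ Set.mem_iUnion.1 (hG ⟨z, hz, rfl⟩)
  rcases Nat.eq_zero_or_pos s with rfl | hs
  · have hG_zero : ∀ z ∈ S, G z = 0 := fun z hz ↦ by
      obtain ⟨i, hi⟩ := hGV z hz
      rwa [Submodule.finrank_eq_zero.1 (Nat.le_zero.1 (hV i)), Submodule.mem_bot] at hi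
    refine (measureReal_mono (s₂ := ∅) ?_).trans (by simp [Real.exp_nonneg])
    refine fun A hA ↦ hA fun ε hε zhat hzhat _ zstar hzstar ↦ ?_
    rw [hG_zero zhat hzhat, hG_zero zstar hzstar]
    linarith [norm_nonneg (0 - x)]
  · let W (i : ι) := V i ⊔ Submodule.span ℝ {x}
    have hW (i : ι) : finrank ℝ (W i) ≤ s + 1 :=
      (finrank_sup_span_singleton_le _ _).trans (Nat.add_le_add_right (hV i) 1)
    have hsub_mem : ∀ z ∈ S, G z - x ∈ ⋃ i, (W i : Set (EuclideanSpace ℝ (Fin n))) :=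
      fun z hz ↦ Set.mem_iUnion.2 <| (hGV z hz).imp fun i hi ↦ Submodule.sub_mem _
        (Submodule.mem_sup_left hi) (Submodule.mem_sup_right (Submodule.mem_span_singleton_self x))
    refine (measureReal_mono fun A ↦ mt fun hA ε hε zhat hzhat hmin zstar hzstar ↦ ?_).trans
      ((measureReal_gaussMatrix_not_normEquivOn_iUnion_le_exp hW).trans
        (mul_pow_mul_exp_neg_le hs hm))
    linarith [hA.mul_norm_sub_le (hsub_mem zhat hzhat) (hsub_mem zstar hzstar)
      (hmin zstar hzstar)]

/-- Theorem 1: with a Gaussian sensing matrix and `m ≳ log N + s` measurements, an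
approximate minimizer of the measurement loss over `s`-sparse latent codes recovers `x`
up to a constant times the representation error, with high probability. -/
theorem sdlss_sample_complexity_recovery :
    ∃ C₀ C₁ c : ℝ, 0 < C₀ ∧ 0 < C₁ ∧ 0 < c ∧
      ∀ (n k s N m : ℕ)
        (G : EuclideanSpace ℝ (Fin k) → EuclideanSpace ℝ (Fin n)), s ≤ k →
        ∀ V : Fin N → Submodule ℝ (EuclideanSpace ℝ (Fin n)),
          (∀ i, Module.finrank ℝ (V i) ≤ s) →
          (G '' {z | Sparse s z} ⊆ ⋃ i, (V i : Set (EuclideanSpace ℝ (Fin n)))) →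
          (m : ℝ) ≥ C₀ * (Real.log N + s) →
          ∀ x : EuclideanSpace ℝ (Fin n),
            ENNReal.ofReal (1 - Real.exp (-c * m)) ≤
              gaussMatrix m n {A | ∀ ε : ℝ, 0 ≤ ε →
                ∀ zhat : EuclideanSpace ℝ (Fin k), Sparse s zhat →
                  (∀ z : EuclideanSpace ℝ (Fin k), Sparse s z →
                    ‖Matrix.toEuclideanLin (Matrix.of A) x
                        - Matrix.toEuclideanLin (Matrix.of A) (G zhat)‖ ≤
                      ‖Matrix.toEuclideanLin (Matrix.of A) x
                        - Matrix.toEuclideanLin (Matrix.of A) (G z)‖ + ε) →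
                  ∀ zstar : EuclideanSpace ℝ (Fin k), Sparse s zstar →
                    ‖G zhat - x‖ ≤ C₁ * ‖G zstar - x‖ + C₁ * ε} := by
  exact ⟨32, 17, 1 / 4, by norm_num, by norm_num, by norm_num, fun _ _ _ _ _ _ _ _ hV hG hm x ↦
    sdlss_sample_complexity_recovery_general hV hG (by simpa using hm) x⟩
end
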